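/- arXiv:2112.10884 — 2 statements merged into one kernel-verified Lean document; each statement's English description precedes it below -/
import Mathlib

section
/- Let G = (V,E) be a finite DAG with ω(G) ≤ m and let X ∈ V be a vertex such that for every S ⊆ Mb(X) with |S| ≤ m−2: (i) for all distinct Y,Z ∈ Mb(X)∖S, the set (Mb(X)∪{X})∖({Y,Z}∪S) does not d-separate Y and Z in G; and (ii) for all Y ∈ Mb(X)∖S, the set Mb(X)∖({Y}∪S) does not d-separate X and Y in G. Then for every Y ∈ Mb(X): Y ∈ CP(X) if and only if there exists S ⊆ Mb(X)∖{Y} with |S| = m−1 such that Mb(X)∖({Y}∪S) d-separates X and Y in G. -/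
/-!
Only `→` needs work, since adjacent vertices are never d-separated and so a separated member of
`Mb X` must be a co-parent.

Call a set `T` of children of `X` *final* if every member of `T` is adjacent to all other vertices
of `Mb X`, and no vertex of `Mb X \ T` descends from a member of `T`. Take a maximal final `T`.

* `FinalSet.extend`: if `|T| ≤ m - 2` and some child of `X` is outside `T`, then `T` can be enlarged.
  Choose `L ∈ Mb X \ T` without descendants in `Mb X \ T`. It is not a parent of `X`, as a child of
  `X` remains. It is not a co-parent, since then `Mb X \ ({L} ∪ T)` would separate `X` from `L`
  (`dSep_coparent`), against (ii). So `L` is a child, all of its parents lie in `Mb X ∪ {X}`, and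
  by the local Markov property (`dSep_of_parents`) a vertex of `Mb X \ T` not adjacent to `L` would
  be separated from it, against (i). Hence `T ∪ {L}` is final.
* If a child `c` of `X` were outside `T`, then `T ∪ {X, c}` would be a clique, so `|T| ≤ m - 2` and
  `T` would not be maximal. Hence `T = Ch X`, and `T ∪ {X}` is a clique, so `|T| ≤ m - 1`.
* As `T = Ch X`, the set `Mb X \ ({Y} ∪ T)` contains `Pa X` and no descendant of `X`, so it separates
  `X` from each co-parent `Y`. By (ii) this forces `|T| > m - 2`, so `T` is the required set.
-/

open Set

variable {V : Type*}

/-- Adjacency (neighbor relation) in a directed graph with edge relation `E`. -/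
def Adj (E : V → V → Prop) (x y : V) : Prop := E x y ∨ E y x

/-- The digraph `E` is acyclic (no directed cycles). -/
def Acyclic (E : V → V → Prop) : Prop := ∀ v : V, ¬ Relation.TransGen E v v

/-- Parents of `x`. -/
def Pa (E : V → V → Prop) (x : V) : Set V := {y | E y x}

/-- Children of `x`. -/
def Ch (E : V → V → Prop) (x : V) : Set V := {y | E x y}

/-- Co-parents of `x`: distinct, non-adjacent vertices sharing a child with `x`. -/
def CP (E : V → V → Prop) (x : V) : Set V :=
  {y | y ≠ x ∧ ¬ Adj E x y ∧ ∃ w, E x w ∧ E y w}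

/-- The (graphical) Markov boundary of `x`. -/
def Mb (E : V → V → Prop) (x : V) : Set V := Pa E x ∪ Ch E x ∪ CP E x

/-- `y` is a descendant of `x`: directed path of length ≥ 1. -/
def Desc (E : V → V → Prop) : V → V → Prop := Relation.TransGen E

/-- `p : Fin (n+1) → V` is a path: distinct vertices with consecutive vertices adjacent. -/
def IsPath (E : V → V → Prop) {n : ℕ} (p : Fin (n + 1) → V) : Prop :=
  Function.Injective p ∧ ∀ i : Fin n, Adj E (p i.castSucc) (p i.succ)

/-- The path `p` is blocked by the set `S`: some interior non-collider vertex lies in `S`,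
or some interior collider vertex is such that neither it nor any of its descendants lies in `S`. -/
def Blocked (E : V → V → Prop) (S : Set V) {n : ℕ} (p : Fin (n + 1) → V) : Prop :=
  ∃ k : ℕ, ∃ _hk0 : 0 < k, ∃ _hkn : k < n,
    (¬ (E (p ⟨k - 1, by omega⟩) (p ⟨k, by omega⟩) ∧
          E (p ⟨k + 1, by omega⟩) (p ⟨k, by omega⟩)) ∧ p ⟨k, by omega⟩ ∈ S) ∨
    ((E (p ⟨k - 1, by omega⟩) (p ⟨k, by omega⟩) ∧
          E (p ⟨k + 1, by omega⟩) (p ⟨k, by omega⟩)) ∧ p ⟨k, by omega⟩ ∉ S ∧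
        ∀ d, Desc E (p ⟨k, by omega⟩) d → d ∉ S)

/-- `S` d-separates the distinct vertices `x` and `y` in the digraph `E`. -/
def DSep (E : V → V → Prop) (x y : V) (S : Set V) : Prop :=
  x ≠ y ∧ x ∉ S ∧ y ∉ S ∧
    ∀ (n : ℕ) (p : Fin (n + 1) → V), 0 < n → IsPath E p →
      p 0 = x → p (Fin.last n) = y → Blocked E S p

/-- The induced subgraph obtained from `E` by deleting the vertex `x`. -/
def Del (E : V → V → Prop) (x : V) : V → V → Prop := fun a b => E a b ∧ a ≠ x ∧ b ≠ x

/-- `x` is removable in `E`: d-separation statements not involving `x` are the same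
in `E` and in the induced subgraph with `x` deleted. -/
def Removable (E : V → V → Prop) (x : V) : Prop :=
  ∀ y z : V, y ≠ x → z ≠ x → y ≠ z → ∀ S : Set V, x ∉ S →
    (DSep E y z S ↔ DSep (Del E x) y z S)

/-- The clique number of the skeleton of `E` is at most `m`. -/
def CliqueNumLE (E : V → V → Prop) (m : ℕ) : Prop :=
  ∀ K : Finset V, (∀ x ∈ K, ∀ y ∈ K, x ≠ y → Adj E x y) → K.card ≤ m

/-- Conditions (i) and (ii) for every `S ⊆ Mb(x)` with `|S| ≤ t`. -/
def RemCond (E : V → V → Prop) (x : V) (t : ℕ) : Prop :=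
  ∀ S : Finset V, ↑S ⊆ Mb E x → S.card ≤ t →
    (∀ y ∈ Mb E x \ ↑S, ∀ z ∈ Mb E x \ ↑S, y ≠ z →
        ¬ DSep E y z ((Mb E x ∪ {x}) \ ({y, z} ∪ ↑S))) ∧
    ∀ y ∈ Mb E x \ ↑S, ¬ DSep E x y (Mb E x \ ({y} ∪ ↑S))

/-- `E` is diamond-free: whenever `a`, `b`, `c` are all parents of some vertex `d` and `a`
is adjacent to both `b` and `c`, then `b` and `c` are adjacent. -/
def DiamondFree (E : V → V → Prop) : Prop :=
  ∀ a b c d : V, a ≠ b → a ≠ c → b ≠ c → E a d → E b d → E c d →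
    Adj E a b → Adj E a c → Adj E b c

/-- A path leaving its start along an edge into `p 1` is blocked if neither `p 1` nor its
descendants meet `B` or the endpoint: the path cannot be directed all the way, and its first
collider is inactive. -/
lemma blocked_of_down (E : V → V → Prop) (B : Set V) {n : ℕ} (p : Fin (n + 1) → V)
    (hn : 0 < n) (hp : IsPath E p)
    (h01 : E (p ⟨0, by omega⟩) (p ⟨1, by omega⟩))
    (hB : ∀ d, Relation.ReflTransGen E (p ⟨1, by omega⟩) d → d ∉ B)
    (hlast : ¬ Relation.ReflTransGen E (p ⟨1, by omega⟩) (p (Fin.last n))) :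
    Blocked E B p := by
  by_contra hnb
  have key : ∀ k (hk : k < n), E (p ⟨k, by omega⟩) (p ⟨k + 1, by omega⟩) ∧
      Relation.ReflTransGen E (p ⟨1, by omega⟩) (p ⟨k + 1, by omega⟩) := by
    intro k
    induction k with
    | zero => exact fun _ => ⟨h01, .refl⟩
    | succ k ih =>
      intro hk
      obtain ⟨h1, h2⟩ := ih (by omega)
      rcases hp.2 ⟨k + 1, hk⟩ with h | h
      · exact ⟨h, h2.tail h⟩
      · exact absurd ⟨k + 1, by omega, hk, Or.inr ⟨⟨h1, h⟩, hB _ h2,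
          fun d hd => hB _ (h2.trans hd.to_reflTransGen)⟩⟩ hnb
  obtain ⟨n, rfl⟩ : ∃ j, n = j + 1 := ⟨n - 1, by omega⟩
  exact hlast (key n (by omega)).2

/-- Local Markov property: a set containing the parents of `x` and no descendant of `x`
d-separates `x` from every non-adjacent non-descendant. -/
lemma dSep_of_parents (E : V → V → Prop) (hacy : Acyclic E) {x y : V} {B : Set V}
    (hxy : x ≠ y) (hadj : ¬ Adj E x y) (hxB : x ∉ B) (hyB : y ∉ B)
    (hPa : ∀ v, E v x → v ∈ B) (hB : ∀ d, Desc E x d → d ∉ B) (hy : ¬ Desc E x y) :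
    DSep E x y B := by
  refine ⟨hxy, hxB, hyB, ?_⟩
  rintro n p hn hp rfl rfl
  rcases hp.2 ⟨0, hn⟩ with h | h
  · exact blocked_of_down E B p hn hp h
      (fun d hd => hB d (Relation.TransGen.head' h hd))
      (fun hd => hy (Relation.TransGen.head' h hd))
  · have h1 : n ≠ 1 := by
      rintro rfl
      exact hadj (Or.inr h)
    refine ⟨1, by omega, by omega, Or.inl ⟨fun hc => ?_, hPa _ h⟩⟩
    exact hacy _ (Relation.TransGen.tail (.single h) hc.1)

/-- A set `T` of children of `X`, each adjacent to every other vertex of the Markov boundary and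
without descendants in the rest of the Markov boundary. -/
structure FinalSet (E : V → V → Prop) (X : V) (T : Finset V) : Prop where
  child : ∀ t ∈ T, E X t
  adj : ∀ t ∈ T, ∀ a ∈ Mb E X, a ≠ t → Adj E t a
  noDesc : ∀ t ∈ T, ∀ a ∈ Mb E X, a ∉ T → ¬ Desc E t a

lemma not_self_mem_Mb {E : V → V → Prop} (hacy : Acyclic E) (X : V) : X ∉ Mb E X := by
  rintro ((h | h) | h)
  · exact hacy X (.single h)
  · exact hacy X (.single h)
  · exact h.1 rfl

lemma mem_Mb_of_parent_of_child {E : V → V → Prop} {X c v : V} (hc : E X c) (hv : E v c)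
    (hvX : v ≠ X) : v ∈ Mb E X := by
  by_cases h : Adj E X v
  · rcases h with h | h
    · exact Or.inl (Or.inr h)
    · exact Or.inl (Or.inl h)
  · exact Or.inr ⟨hvX, h, c, hc, hv⟩

lemma parent_notMem {E : V → V → Prop} (hacy : Acyclic E) {X v : V} {T : Finset V}
    (hT : FinalSet E X T) (hv : E v X) : v ∉ T :=
  fun h => hacy v (Relation.TransGen.tail (.single hv) (hT.child v h))

/-- A co-parent `L` with no descendants in `Mb X \ T` is separated from `X` once `T` is dropped from
the conditioning set. The parents of `L` need not be conditioned on; instead every path is blocked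
within two steps of `X`, or at its first collider if it starts through `T`. -/
lemma dSep_coparent {E : V → V → Prop} (hacy : Acyclic E) {X L : V} {T : Finset V}
    (hT : FinalSet E X T) (hL : L ∈ CP E X) (hLT : L ∉ T)
    (hmax : ∀ a ∈ Mb E X, a ∉ T → ¬ Desc E L a) :
    DSep E X L (Mb E X \ ({L} ∪ ↑T)) := by
  have hLMb : L ∈ Mb E X := Or.inr hL
  have memB : ∀ v ∈ Mb E X, v ≠ L → v ∉ T → v ∈ Mb E X \ ({L} ∪ (↑T : Set V)) :=
    fun v h1 h2 h3 => ⟨h1, by simp [h2, h3]⟩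
  refine ⟨hL.1.symm, fun h => not_self_mem_Mb hacy X h.1, fun h => h.2 (by simp), ?_⟩
  intro n p hn hp h0 hlast
  have h1 : n ≠ 1 := by
    rintro rfl
    have := hp.2 0
    exact hL.2.1 (by rw [← h0, ← hlast]; exact this)
  have hinj : ∀ i j (hi : i < n + 1) (hj : j < n + 1), p ⟨i, hi⟩ = p ⟨j, hj⟩ → i = j :=
    fun i j hi hj h => by simpa using hp.1 h
  have hlast' : p ⟨n, by omega⟩ = L := hlast
  have h0' : p ⟨0, by omega⟩ = X := h0
  have h1L : p ⟨1, by omega⟩ ≠ L := fun h => by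
    have := hinj 1 n _ _ (h.trans hlast'.symm)
    omega
  rcases hp.2 ⟨0, hn⟩ with h | h
  · change E (p ⟨0, _⟩) (p ⟨1, _⟩) at h
    have hX1 : E X (p ⟨1, by omega⟩) := h0' ▸ h
    have h1Mb : p ⟨1, by omega⟩ ∈ Mb E X := Or.inl (Or.inr hX1)
    by_cases hZT : p ⟨1, by omega⟩ ∈ T
    · refine blocked_of_down E _ p hn hp h ?_ ?_
      · intro d hd hdB
        have hdT : d ∉ T := fun hdT => hdB.2 (Or.inr hdT)
        rcases Relation.reflTransGen_iff_eq_or_transGen.1 hd with rfl | hd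
        · exact hdT hZT
        · exact hT.noDesc _ hZT d hdB.1 hdT hd
      · rw [hlast]
        intro hd
        rcases Relation.reflTransGen_iff_eq_or_transGen.1 hd with hd | hd
        · exact h1L hd.symm
        · exact hT.noDesc _ hZT L hLMb hLT hd
    · by_cases hcol : E (p ⟨2, by omega⟩) (p ⟨1, by omega⟩)
      · -- Here `p 2` is a parent of the child `p 1`, hence a conditioned non-collider.
        have h2X : p ⟨2, by omega⟩ ≠ X := fun h => by
          have := hinj 2 0 _ _ (h.trans h0'.symm)
          omega
        have h2L : p ⟨2, by omega⟩ ≠ L := fun h => by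
          rw [h] at hcol
          exact hmax _ h1Mb hZT (.single hcol)
        have h2Mb := mem_Mb_of_parent_of_child hX1 hcol h2X
        have h2T : p ⟨2, by omega⟩ ∉ T := fun h => hT.noDesc _ h _ h1Mb hZT (.single hcol)
        have h2n : n ≠ 2 := by
          rintro rfl
          exact h2L hlast'
        refine ⟨2, by omega, by omega, Or.inl ⟨fun hc => ?_, memB _ h2Mb h2L h2T⟩⟩
        exact hacy _ (Relation.TransGen.tail (.single hcol) hc.1)
      · exact ⟨1, by omega, by omega, Or.inl ⟨fun hc => hcol hc.2, memB _ h1Mb h1L hZT⟩⟩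
  · change E (p ⟨1, _⟩) (p ⟨0, _⟩) at h
    have hX1 : E (p ⟨1, by omega⟩) X := h0' ▸ h
    refine ⟨1, by omega, by omega, Or.inl ⟨fun hc => ?_,
      memB _ (Or.inl (Or.inl hX1)) h1L (parent_notMem hacy hT hX1)⟩⟩
    exact hacy _ (Relation.TransGen.tail (.single h) hc.1)

/-- In a finite DAG every nonempty set of vertices has a member without descendants in the set. -/
lemma exists_last [Finite V] {E : V → V → Prop} (hacy : Acyclic E) {A : Set V}
    (hA : A.Nonempty) : ∃ L ∈ A, ∀ a ∈ A, ¬ Desc E L a := by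
  let r : V → V → Prop := fun a b => Relation.TransGen E b a
  have : IsTrans V r := ⟨fun a b c h1 h2 => Relation.TransGen.trans h2 h1⟩
  have : Std.Irrefl r := ⟨hacy⟩
  exact (Finite.wellFounded_of_trans_of_irrefl r).has_min A hA

open Classical in
/-- A final set of at most `t` vertices that misses a child of `X` can be enlarged. -/
lemma FinalSet.extend [Finite V] {E : V → V → Prop} (hacy : Acyclic E) {X c : V} {t : ℕ}
    (hX : RemCond E X t) {T : Finset V} (hT : FinalSet E X T) (hcard : T.card ≤ t)
    (hc : E X c) (hcT : c ∉ T) : ∃ L, L ∉ T ∧ FinalSet E X (insert L T) := by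
  have hcMb : c ∈ Mb E X := Or.inl (Or.inr hc)
  have hTMb : (↑T : Set V) ⊆ Mb E X := fun v hv => Or.inl (Or.inr (hT.child v hv))
  obtain ⟨L, ⟨hLMb, hLT⟩, hmax⟩ := exists_last hacy (A := Mb E X \ ↑T) ⟨c, hcMb, hcT⟩
  have hmax' : ∀ a ∈ Mb E X, a ∉ T → ¬ Desc E L a := fun a h1 h2 => hmax a ⟨h1, h2⟩
  obtain ⟨hi, hii⟩ := hX T hTMb hcard
  have hLX : E X L := by
    rcases id hLMb with (h | h) | h
    · exact absurd (Relation.TransGen.tail (.single h) hc) (hmax' c hcMb hcT)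
    · exact h
    · exact absurd (dSep_coparent hacy hT h hLT hmax') (hii L ⟨hLMb, hLT⟩)
  have hadj : ∀ a ∈ Mb E X, a ∉ T → a ≠ L → Adj E L a := by
    intro a ha haT haL
    by_contra hna
    refine hi L ⟨hLMb, hLT⟩ a ⟨ha, haT⟩ haL.symm ?_
    refine dSep_of_parents E hacy haL.symm hna (fun h => h.2 (by simp)) (fun h => h.2 (by simp))
      ?_ ?_ (hmax' a ha haT)
    · intro v hv
      have hvL : v ≠ L := by
        rintro rfl
        exact hacy _ (.single hv)
      have hva : v ≠ a := by
        rintro rfl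
        exact hna (Or.inr hv)
      have hvT : v ∉ T := fun h => hT.noDesc v h L hLMb hLT (.single hv)
      refine ⟨?_, by simp [hvL, hva, hvT]⟩
      by_cases hvX : v = X
      · exact Or.inr hvX
      · exact Or.inl (mem_Mb_of_parent_of_child hLX hv hvX)
    · rintro d hd ⟨h1 | rfl, h2⟩
      · exact hmax' d h1 (fun h => h2 (Or.inr h)) hd
      · exact hacy _ (Relation.TransGen.head hLX hd)
  refine ⟨L, hLT, ?_, ?_, ?_⟩
  · intro t ht
    rcases Finset.mem_insert.1 ht with rfl | ht
    · exact hLX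
    · exact hT.child t ht
  · intro t ht a ha hat
    rcases Finset.mem_insert.1 ht with rfl | ht
    · by_cases haT : a ∈ T
      · exact (hT.adj a haT t hLMb hat.symm).symm
      · exact hadj a ha haT hat
    · exact hT.adj t ht a ha hat
  · intro t ht a ha haT
    have haT' : a ∉ T := fun h => haT (Finset.mem_insert_of_mem h)
    rcases Finset.mem_insert.1 ht with rfl | ht
    · exact hmax' a ha haT'
    · exact hT.noDesc t ht a ha haT'

open Classical in
/-- A final set together with `X` is a clique. -/
lemma FinalSet.clique {E : V → V → Prop} {X : V} {T : Finset V} (hT : FinalSet E X T) :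
    ∀ x ∈ insert X T, ∀ y ∈ insert X T, x ≠ y → Adj E x y := by
  intro x hx y hy hxy
  rcases Finset.mem_insert.1 hx with rfl | hxT <;> rcases Finset.mem_insert.1 hy with rfl | hyT
  · exact absurd rfl hxy
  · exact Or.inl (hT.child y hyT)
  · exact Or.inr (hT.child x hxT)
  · exact hT.adj x hxT y (Or.inl (Or.inr (hT.child y hyT))) hxy.symm

open Classical in
/-- For a final set `T` and any child `c` of `X`, the set `T ∪ {X, c}` is a clique. -/
lemma FinalSet.clique_insert {E : V → V → Prop} {X c : V} {T : Finset V} (hT : FinalSet E X T)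
    (hc : E X c) :
    ∀ x ∈ insert c (insert X T), ∀ y ∈ insert c (insert X T), x ≠ y → Adj E x y := by
  have hcMb : c ∈ Mb E X := Or.inl (Or.inr hc)
  have key : ∀ y ∈ insert X T, c ≠ y → Adj E y c := by
    intro y hy hcy
    rcases Finset.mem_insert.1 hy with rfl | hy
    · exact Or.inl hc
    · exact hT.adj y hy c hcMb hcy
  intro x hx y hy hxy
  rcases Finset.mem_insert.1 hx with rfl | hxT <;> rcases Finset.mem_insert.1 hy with rfl | hyT
  · exact absurd rfl hxy
  · exact (key y hyT hxy).symm
  · exact key x hxT hxy.symm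
  · exact hT.clique x hxT y hyT hxy

/-- characterization of co-parents of a vertex satisfying the removability
condition, via d-separation after removing a set of size `m - 1`. -/
theorem stmt4 [Fintype V] (E : V → V → Prop) (hacy : Acyclic E) (m : ℕ)
    (hclq : CliqueNumLE E m) (X : V) (hX : RemCond E X (m - 2)) :
    ∀ Y ∈ Mb E X,
      (Y ∈ CP E X ↔
        ∃ S : Finset V, ↑S ⊆ Mb E X \ {Y} ∧ S.card = m - 1 ∧
          DSep E X Y (Mb E X \ ({Y} ∪ ↑S))) := by
  classical
  intro Y hY
  constructor
  · intro hCP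
    obtain ⟨T, hT, hTmax⟩ := (Set.toFinite {T | FinalSet E X T}).exists_maximal
      ⟨∅, ⟨by simp, by simp, by simp⟩⟩
    have hXT : X ∉ T := fun h => hacy X (.single (hT.child X h))
    -- The maximal final set consists of all children.
    have hall : ∀ c, E X c → c ∈ T := by
      intro c hc
      by_contra hcT
      have h1 := hclq _ (hT.clique_insert hc)
      have hcX : c ∉ insert X T := by
        intro h
        rcases Finset.mem_insert.1 h with rfl | h
        · exact hacy _ (.single hc)
        · exact hcT h
      rw [Finset.card_insert_of_notMem hcX, Finset.card_insert_of_notMem hXT] at h1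
      obtain ⟨L, hLT, hL⟩ := FinalSet.extend hacy hX hT (by omega) hc hcT
      exact hLT (hTmax hL (Finset.subset_insert L T) (Finset.mem_insert_self L T))
    have hYT : Y ∉ T := fun h => hCP.2.1 (Or.inl (hT.child Y h))
    have hTMb : (↑T : Set V) ⊆ Mb E X := fun v hv => Or.inl (Or.inr (hT.child v hv))
    have hdesc : ∀ a ∈ Mb E X, a ∉ T → ¬ Desc E X a := by
      intro a ha haT hd
      obtain ⟨c, hc, hca⟩ := Relation.TransGen.head'_iff.1 hd
      rcases Relation.reflTransGen_iff_eq_or_transGen.1 hca with rfl | hca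
      · exact haT (hall _ hc)
      · exact hT.noDesc c (hall c hc) a ha haT hca
    have hsep : DSep E X Y (Mb E X \ ({Y} ∪ ↑T)) := by
      refine dSep_of_parents E hacy hCP.1.symm hCP.2.1 (fun h => not_self_mem_Mb hacy X h.1)
        (fun h => h.2 (by simp)) ?_ ?_ (hdesc Y hY hYT)
      · intro v hv
        have hvY : v ≠ Y := by
          rintro rfl
          exact hCP.2.1 (Or.inr hv)
        have hvT := parent_notMem hacy hT hv
        exact ⟨Or.inl (Or.inl hv), by simp [hvY, hvT]⟩
      · exact fun d hd hdB => hdesc d hdB.1 (fun h => hdB.2 (Or.inr h)) hd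
    refine ⟨T, fun v hv => ⟨hTMb hv, ?_⟩, ?_, hsep⟩
    · rintro rfl
      exact hYT hv
    · have h1 := hclq _ hT.clique
      rw [Finset.card_insert_of_notMem hXT] at h1
      have h2 : ¬ T.card ≤ m - 2 := fun h => (hX T hTMb h).2 Y ⟨hY, hYT⟩ hsep
      omega
  · rintro ⟨S, -, -, hXY, -, -, hblk⟩
    -- An edge between `X` and `Y` is a path without interior vertices, which nothing blocks.
    have hna : ¬ Adj E X Y := by
      intro hadj
      obtain ⟨k, h1, h2, -⟩ := hblk 1 ![X, Y] (by omega)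
        ⟨by
          intro i j hij
          fin_cases i <;> fin_cases j <;> simp_all, by
          intro i
          fin_cases i
          exact hadj⟩ rfl rfl
      omega
    rcases hY with (h | h) | h
    · exact absurd (Or.inr h) hna
    · exact absurd (Or.inl h) hna
    · exact h
end

section
/- Let G = (V,E) be a finite diamond-free DAG and X ∈ V. Then X is removable in G if and only if for all distinct Y,Z ∈ Mb(X), the set (Mb(X)∪{X})∖{Y,Z} does not d-separate Y and Z in G. -/
/-!
The argument goes through the classical local description of removability. Write

* (C1) every child `Z` of `X` is adjacent to every other neighbour of `X`;
* (C2) if `Y → Z` are two children of `X`, then every parent of `Y` is a parent of `Z`.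

**Removable implies (C1), (C2).** A violation of (C1) or (C2) gives two non-adjacent vertices that
are d-connected in `G` through `X` given any suitable set avoiding `X`, while in `G ∖ X` they are
d-separated by the parents of the later of the two (`dsep_parents`).

**(C1), (C2) imply removable.** An active path in `G ∖ X` is active in `G`. Conversely,
d-connection is translated into connectedness, off `S`, in the moral graph of the ancestors `D`
of `S ∪ {y, z}` (`moral_of_act`, `act_of_moral`). If `X ∈ D`, then `X` has a child in `D`; let `T`
be a last such child. By (C1) and (C2) all moral neighbours of `X` lie in `Pa(T) ∪ {T}`
(`eq_or_edge_of_last`), so `X` may be bypassed through `T` (`moral_del`).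

**The Markov boundary condition is equivalent to (C1), (C2) in a diamond-free DAG.** Let `T` be a
last child of `X` (if there is none, any two members of `Mb(X)` are parents of `X` and both sides
hold). Under (C1), (C2), `Mb(X) ⊆ Pa(T) ∪ {T}`, so two members of `Mb(X)` are adjacent or are
joined by the collider `T`. Conversely no member of `Mb(X) ∪ {X}` is a descendant of `T`, so a
non-parent of `T` in `Mb(X)` would be d-separated from `T` (`no_act`); hence again
`Mb(X) ⊆ Pa(T) ∪ {T}`, and diamond-freeness among the parents of `T` yields (C1) and (C2).

d-connection is handled with active walks, which may repeat vertices; a shortest active walk is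
a path (`exists_injective`).
-/

open Set

variable {V : Type*}

open Relation

/-! ### Active walks -/

/-- `v` lies in `S` or has a descendant in `S`. -/
def AnS (E : V → V → Prop) (S : Set V) (v : V) : Prop := ∃ s ∈ S, ReflTransGen E v s

/-- `p 0, …, p n` is a walk (repetitions allowed) that is not blocked by `S`; the values of `p`
beyond `n` are irrelevant. -/
def Walk (E : V → V → Prop) (S : Set V) (p : ℕ → V) (n : ℕ) : Prop :=
  (∀ i, i < n → Adj E (p i) (p (i + 1))) ∧
  ∀ k, k + 1 < n →
    (E (p k) (p (k + 1)) ∧ E (p (k + 2)) (p (k + 1)) → AnS E S (p (k + 1))) ∧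
    (¬ (E (p k) (p (k + 1)) ∧ E (p (k + 2)) (p (k + 1))) → p (k + 1) ∉ S)

/-- `y` and `z` are joined by a walk that is active given `S`. -/
def Act (E : V → V → Prop) (S : Set V) (y z : V) : Prop :=
  ∃ n p, p 0 = y ∧ p n = z ∧ Walk E S p n

theorem Acyclic.asymm {E : V → V → Prop} (h : Acyclic E) {a b : V} (h1 : E a b) : ¬ E b a :=
  fun h2 => h a ((TransGen.single h1).tail h2)

theorem Acyclic.irrefl {E : V → V → Prop} (h : Acyclic E) {a : V} : ¬ E a a :=
  fun h2 => h a (TransGen.single h2)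

theorem act_of_not_dsep {E : V → V → Prop} {S : Set V} {y z : V} (hyz : y ≠ z) (hy : y ∉ S)
    (hz : z ∉ S) (h : ¬ DSep E y z S) : Act E S y z := by
  have h' : ∃ (n : ℕ) (p : Fin (n + 1) → V), 0 < n ∧ IsPath E p ∧
      p 0 = y ∧ p (Fin.last n) = z ∧ ¬ Blocked E S p := by
    by_contra hc
    push Not at hc
    exact h ⟨hyz, hy, hz, hc⟩
  obtain ⟨n, p, hn, hp, h0, hl, hb⟩ := h'
  have e : ∀ k (hk : k < n + 1),
      (fun k => if h : k < n + 1 then p ⟨k, h⟩ else y) k = p ⟨k, hk⟩ := by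
    intro k hk; simp [hk]
  refine ⟨n, fun k => if h : k < n + 1 then p ⟨k, h⟩ else y, ?_, ?_, ?_, ?_⟩
  · rw [e 0 (by omega)]; exact h0
  · rw [e n (by omega)]; exact hl
  · intro i hi
    rw [e i (by omega), e (i + 1) (by omega)]
    exact hp.2 ⟨i, hi⟩
  · intro k hk
    rw [e k (by omega), e (k + 1) (by omega), e (k + 2) (by omega)]
    constructor
    · intro hcol
      by_contra hna
      refine hb ⟨k + 1, by omega, hk, Or.inr ⟨hcol, ?_, ?_⟩⟩
      · exact fun hs => hna ⟨_, hs, ReflTransGen.refl⟩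
      · exact fun d hd hs => hna ⟨d, hs, hd.to_reflTransGen⟩
    · intro hncol hs
      exact hb ⟨k + 1, by omega, hk, Or.inl ⟨hncol, hs⟩⟩

/-- Cutting out the loop between two occurrences `p i = p j` of a vertex keeps a walk active. The
only delicate case is a cut creating a collider at `p i`: then `p i` is an ancestor of the first
collider inside the loop. -/
theorem Walk.cut {E : V → V → Prop} {S : Set V} {p : ℕ → V} {n i j : ℕ}
    (h : Walk E S p n) (hij : i < j) (hjn : j ≤ n) (e : p i = p j) :
    ∃ q : ℕ → V, q 0 = p 0 ∧ q (n - (j - i)) = p n ∧ Walk E S q (n - (j - i)) := by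
  have key : 0 < i → j < n → E (p (i - 1)) (p i) → E (p (j + 1)) (p j) → AnS E S (p i) := by
    intro hi hj h1 h2
    by_cases h3 : E (p (i + 1)) (p i)
    · have := (h.2 (i - 1) (by omega)).1
      rw [show i - 1 + 1 = i by omega, show i - 1 + 2 = i + 1 by omega] at this
      exact this ⟨h1, h3⟩
    by_cases h4 : E (p (j - 1)) (p j)
    · have := (h.2 (j - 1) (by omega)).1
      rw [show j - 1 + 1 = j by omega, show j - 1 + 2 = j + 1 by omega] at this
      rw [e]
      exact this ⟨h4, h2⟩
    -- follow the edges leaving `p i` until the first one that points backwards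
    have claim : ∀ d, d < j - i → E (p (i + d)) (p (i + d + 1)) ∧
        ReflTransGen E (p i) (p (i + d)) ∨ AnS E S (p i) := by
      intro d
      induction d with
      | zero =>
        intro _
        exact Or.inl ⟨(h.1 i (by omega)).resolve_right h3, ReflTransGen.refl⟩
      | succ d ih =>
        intro hd
        rcases ih (by omega) with ⟨a, b⟩ | a
        · rcases h.1 (i + (d + 1)) (by omega) with c | c
          · exact Or.inl ⟨c, b.tail a⟩
          · obtain ⟨s, hs, hr⟩ := (h.2 (i + d) (by omega)).1 ⟨a, c⟩
            exact Or.inr ⟨s, hs, (b.tail a).trans hr⟩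
        · exact Or.inr a
    rcases claim (j - i - 1) (by omega) with ⟨a, -⟩ | a
    · rw [show i + (j - i - 1) + 1 = j by omega, show i + (j - i - 1) = j - 1 by omega] at a
      exact absurd a h4
    · exact a
  have q1 : ∀ k, k ≤ i → (fun k => if k ≤ i then p k else p (k + (j - i))) k = p k := by
    intro k hk; simp [hk]
  have q2 : ∀ k, i ≤ k →
      (fun k => if k ≤ i then p k else p (k + (j - i))) k = p (k + (j - i)) := by
    intro k hk
    rcases hk.eq_or_lt with rfl | hk
    · simp [e, show i + (j - i) = j by omega]
    · simp [show ¬ k ≤ i by omega]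
  refine ⟨fun k => if k ≤ i then p k else p (k + (j - i)), q1 0 (by omega), ?_, ?_, ?_⟩
  · rw [q2 _ (by omega), show n - (j - i) + (j - i) = n by omega]
  · intro k hk
    rcases Nat.lt_or_ge k i with hki | hki
    · rw [q1 k (by omega), q1 (k + 1) (by omega)]
      exact h.1 k (by omega)
    · rw [q2 k hki, q2 (k + 1) (by omega), show k + 1 + (j - i) = k + (j - i) + 1 by omega]
      exact h.1 _ (by omega)
  · intro k hk
    rcases lt_trichotomy (k + 1) i with hki | hki | hki
    · rw [q1 k (by omega), q1 (k + 1) (by omega), q1 (k + 2) (by omega)]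
      exact h.2 k (by omega)
    · rw [q1 k (by omega), q1 (k + 1) (by omega), q2 (k + 2) (by omega), hki,
        show k + 2 + (j - i) = j + 1 by omega]
      have hk' : k = i - 1 := by omega
      constructor
      · rintro ⟨h1, h2⟩
        rw [e] at h2
        exact key (by omega) (by omega) (hk' ▸ h1) h2
      · intro hn
        by_cases h1 : E (p k) (p i)
        · rw [e]
          have := (h.2 (j - 1) (by omega)).2
          rw [show j - 1 + 1 = j by omega, show j - 1 + 2 = j + 1 by omega] at this
          apply this
          rintro ⟨-, h2⟩
          exact hn ⟨h1, e ▸ h2⟩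
        · have := (h.2 k (by omega)).2
          rw [hki] at this
          exact this fun hh => h1 hh.1
    · rw [q2 k (by omega), q2 (k + 1) (by omega), q2 (k + 2) (by omega),
        show k + 1 + (j - i) = k + (j - i) + 1 by omega,
        show k + 2 + (j - i) = k + (j - i) + 2 by omega]
      exact h.2 _ (by omega)

theorem exists_injective {E : V → V → Prop} {S : Set V} {y z : V}
    (h : Act E S y z) :
    ∃ n p, p 0 = y ∧ p n = z ∧ Walk E S p n ∧ ∀ i j, i < j → j ≤ n → p i ≠ p j := by
  classical
  obtain ⟨p, h0, hn, hw⟩ := Nat.find_spec h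
  refine ⟨Nat.find h, p, h0, hn, hw, fun i j hij hj e => ?_⟩
  obtain ⟨q, q0, qn, hq⟩ := hw.cut hij hj e
  exact Nat.find_min h (m := Nat.find h - (j - i)) (by omega) ⟨q, q0.trans h0, qn.trans hn, hq⟩

theorem not_dsep_of_act {E : V → V → Prop} {S : Set V} {y z : V}
    (h : Act E S y z) : ¬ DSep E y z S := by
  rintro ⟨hyz, -, -, hb⟩
  obtain ⟨n, p, h0, hn, hw, hinj⟩ := exists_injective h
  have hpos : 0 < n := by
    rcases Nat.eq_zero_or_pos n with rfl | h'
    · exact absurd (h0.symm.trans hn) hyz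
    · exact h'
  have hinj' : Function.Injective fun i : Fin (n + 1) => p i := by
    intro i j hij
    rcases lt_trichotomy (i : ℕ) j with h' | h' | h'
    · exact absurd hij (hinj i j h' (by omega))
    · exact Fin.ext h'
    · exact absurd hij.symm (hinj j i h' (by omega))
  obtain ⟨k, hk0, hkn, hk⟩ := hb n (fun i => p i) hpos ⟨hinj', fun i => hw.1 i i.2⟩ h0 hn
  obtain ⟨k, rfl⟩ : ∃ m, k = m + 1 := ⟨k - 1, by omega⟩
  have hh := hw.2 k hkn
  rcases hk with ⟨h1, h2⟩ | ⟨h1, h2, h3⟩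
  · exact hh.2 h1 h2
  · obtain ⟨s, hs, hr⟩ := hh.1 h1
    rcases reflTransGen_iff_eq_or_transGen.1 hr with rfl | ht
    · exact h2 hs
    · exact h3 s ht hs

/-- `v` is reached from `y` by a walk that is active given `S`; `d = true` records that the last
edge points into `v`, and `d = false` that it points out of `v` or that the walk is trivial. -/
def Reach (E : V → V → Prop) (S : Set V) (y v : V) (d : Bool) : Prop :=
  ∃ n p, p 0 = y ∧ p n = v ∧ Walk E S p n ∧
    (d = true → ∃ m, n = m + 1 ∧ E (p m) (p n)) ∧
    (d = false → ∀ m, n = m + 1 → E (p n) (p m))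

theorem Reach.act {E : V → V → Prop} {S : Set V} {y v : V} {d : Bool} (h : Reach E S y v d) :
    Act E S y v := by
  obtain ⟨n, p, h0, hn, hw, -⟩ := h
  exact ⟨n, p, h0, hn, hw⟩

theorem Reach.refl (E : V → V → Prop) (S : Set V) (y : V) : Reach E S y y false :=
  ⟨0, fun _ => y, rfl, rfl, ⟨by simp, by simp⟩, by simp, by simp⟩

/-- Appending one vertex to an active walk, given the activity condition at the old endpoint. -/
theorem Walk.snoc {E : V → V → Prop} {S : Set V} {p : ℕ → V} {n : ℕ} (h : Walk E S p n) {w : V}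
    (ha : Adj E (p n) w)
    (hc : ∀ m, n = m + 1 → (E (p m) (p n) ∧ E w (p n) → AnS E S (p n)) ∧
      (¬ (E (p m) (p n) ∧ E w (p n)) → p n ∉ S)) :
    ∃ q : ℕ → V, (∀ k, k ≤ n → q k = p k) ∧ q (n + 1) = w ∧ Walk E S q (n + 1) := by
  have q1 : ∀ k, k ≤ n → (fun k => if k ≤ n then p k else w) k = p k := by
    intro k hk; simp [hk]
  have q2 : (fun k => if k ≤ n then p k else w) (n + 1) = w := by simp
  refine ⟨fun k => if k ≤ n then p k else w, q1, q2, ?_, ?_⟩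
  · intro i hi
    rcases Nat.lt_or_ge i n with h1 | h1
    · rw [q1 i h1.le, q1 (i + 1) h1]
      exact h.1 i h1
    · obtain rfl : i = n := by omega
      rw [q1 i le_rfl, q2]
      exact ha
  · intro k hk
    rcases Nat.lt_or_ge (k + 1) n with h1 | h1
    · rw [q1 k (by omega), q1 (k + 1) (by omega), q1 (k + 2) (by omega)]
      exact h.2 k h1
    · obtain rfl : n = k + 1 := by omega
      rw [q1 k (by omega), q1 (k + 1) (by omega), q2]
      exact hc k rfl

theorem Reach.step_in {E : V → V → Prop} (hacy : Acyclic E) {S : Set V} {y v w : V} {d : Bool}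
    (h : Reach E S y v d) (he : E v w) (hv : v ∉ S) : Reach E S y w true := by
  obtain ⟨n, p, h0, rfl, hw, -, -⟩ := h
  obtain ⟨q, q1, q2, hq⟩ := hw.snoc (Or.inl he)
    fun m _ => ⟨fun hh => absurd hh.2 (hacy.asymm he), fun _ => hv⟩
  refine ⟨n + 1, q, (q1 0 (by omega)).trans h0, q2, hq, fun _ => ⟨n, rfl, ?_⟩, by simp⟩
  rw [q1 n le_rfl, q2]
  exact he

theorem Reach.step_out {E : V → V → Prop} (hacy : Acyclic E) {S : Set V} {y v w : V} {d : Bool}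
    (h : Reach E S y v d) (he : E w v) (h1 : d = true → AnS E S v) (h2 : d = false → v ∉ S) :
    Reach E S y w false := by
  obtain ⟨n, p, h0, rfl, hw, ht, hf⟩ := h
  have hc : ∀ m, n = m + 1 → (E (p m) (p n) ∧ E w (p n) → AnS E S (p n)) ∧
      (¬ (E (p m) (p n) ∧ E w (p n)) → p n ∉ S) := by
    intro m hm
    cases d with
    | true =>
      obtain ⟨m', hm', hE⟩ := ht rfl
      obtain rfl : m = m' := by omega
      exact ⟨fun _ => h1 rfl, fun hh => absurd ⟨hE, he⟩ hh⟩
    | false =>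
      exact ⟨fun hh => absurd hh.1 (hacy.asymm (hf rfl m hm)), fun _ => h2 rfl⟩
  obtain ⟨q, q1, q2, hq⟩ := hw.snoc (Or.inr he) hc
  refine ⟨n + 1, q, (q1 0 (by omega)).trans h0, q2, hq, by simp, fun _ m hm => ?_⟩
  obtain rfl : n = m := by omega
  rw [q1 n le_rfl, q2]
  exact he

/-- Local Markov property: if `S` contains the parents of `z` and no descendant of `z`, then it
blocks `z` from every `y` that is neither a parent nor a descendant of `z`. -/
theorem no_act {E : V → V → Prop} (hacy : Acyclic E) {S : Set V} {y z : V} (hyz : y ≠ z)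
    (hE : ¬ E y z) (hd : ¬ TransGen E z y) (hpa : ∀ u, E u z → u ≠ y → u ∈ S)
    (hS : ∀ s ∈ S, ¬ TransGen E z s) : ¬ Act E S y z := by
  rintro ⟨n, p, h0, hn, hw⟩
  obtain ⟨n, rfl⟩ : ∃ m, n = m + 1 := by
    cases n with
    | zero => exact absurd (h0.symm.trans hn) hyz
    | succ m => exact ⟨m, rfl⟩
  have hlast : E z (p n) := by
    rcases hw.1 n (by omega) with h | h
    · exfalso
      rw [hn] at h
      have hne : p n ≠ y := fun hh => hE (hh ▸ h)
      cases n with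
      | zero => exact hne h0
      | succ m =>
        refine (hw.2 m (by omega)).2 ?_ (hpa _ h hne)
        rintro ⟨-, h2⟩
        rw [hn] at h2
        exact hacy.asymm h h2
    · rwa [hn] at h
  -- going back from `z`, no collider can be met, so every edge points away from `z`
  have claim : ∀ d, d ≤ n → E (p (n - d + 1)) (p (n - d)) ∧ TransGen E z (p (n - d)) := by
    intro d
    induction d with
    | zero => intro _; simpa [hn] using ⟨hlast, TransGen.single hlast⟩
    | succ d ih =>
      intro hdn
      obtain ⟨h1, h2⟩ := ih (by omega)
      obtain ⟨m, hm⟩ : ∃ m, n - d = m + 1 := ⟨n - d - 1, by omega⟩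
      rw [hm] at h1 h2
      rw [show n - (d + 1) = m by omega]
      rcases hw.1 m (by omega) with h3 | h3
      · obtain ⟨s, hs, hr⟩ := (hw.2 m (by omega)).1 ⟨h3, h1⟩
        exact absurd (TransGen.trans_left h2 hr) (hS s hs)
      · exact ⟨h3, h2.tail h3⟩
  have := (claim n le_rfl).2
  rw [Nat.sub_self, h0] at this
  exact hd this

theorem dsep_parents {E : V → V → Prop} (hacy : Acyclic E) {y z : V} (hyz : y ≠ z)
    (hE : ¬ E y z) (hd : ¬ TransGen E z y) : DSep E y z {u | E u z} := by
  by_contra h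
  refine no_act hacy hyz hE hd (fun u hu _ => hu) (fun s hs ht => ?_)
    (act_of_not_dsep hyz hE hacy.irrefl h)
  exact hacy z (ht.tail hs)

/-! ### The moralized ancestral graph -/

/-- Ancestors (in the reflexive sense) of `S ∪ {y, z}`. -/
def AncD (E : V → V → Prop) (S : Set V) (y z v : V) : Prop :=
  ∃ s, (s ∈ S ∨ s = y ∨ s = z) ∧ ReflTransGen E v s

/-- Adjacency, off `S`, in the moral graph of the subgraph induced on the ancestors of
`S ∪ {y, z}`. -/
def Moral (E : V → V → Prop) (S : Set V) (y z a b : V) : Prop :=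
  (a ∉ S ∧ AncD E S y z a) ∧ (b ∉ S ∧ AncD E S y z b) ∧
    (Adj E a b ∨ ∃ c, AncD E S y z c ∧ E a c ∧ E b c)

theorem AncD.head {E : V → V → Prop} {S : Set V} {y z a b : V} (h : AncD E S y z b)
    (he : E a b) : AncD E S y z a := by
  obtain ⟨s, hs, hr⟩ := h
  exact ⟨s, hs, ReflTransGen.head he hr⟩

theorem AncD.of_anS {E : V → V → Prop} {S : Set V} {y z a : V} (h : AnS E S a) :
    AncD E S y z a := by
  obtain ⟨s, hs, hr⟩ := h
  exact ⟨s, Or.inl hs, hr⟩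

/-- All vertices of an active walk are ancestors of `S` or of an endpoint. -/
theorem Walk.ancD {E : V → V → Prop} {S : Set V} {y z : V} {p : ℕ → V} {n : ℕ}
    (h : Walk E S p n) (h0 : p 0 = y) (hn : p n = z) :
    ∀ k, k ≤ n → AncD E S y z (p k) := by
  have hy : AncD E S y z y := ⟨y, Or.inr (Or.inl rfl), ReflTransGen.refl⟩
  have hz : AncD E S y z z := ⟨z, Or.inr (Or.inr rfl), ReflTransGen.refl⟩
  have fwd : ∀ d k, k + d + 1 = n → E (p k) (p (k + 1)) → AncD E S y z (p k) := by
    intro d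
    induction d with
    | zero =>
      intro k hk he
      refine AncD.head (b := p (k + 1)) ?_ he
      rw [show k + 1 = n by omega, hn]
      exact hz
    | succ d ih =>
      intro k hk he
      refine AncD.head (b := p (k + 1)) ?_ he
      rcases h.1 (k + 1) (by omega) with h1 | h1
      · exact ih (k + 1) (by omega) h1
      · exact AncD.of_anS ((h.2 k (by omega)).1 ⟨he, h1⟩)
  have bwd : ∀ k, k < n → E (p (k + 1)) (p k) → AncD E S y z (p (k + 1)) := by
    intro k
    induction k with
    | zero =>
      intro hk he
      refine AncD.head ?_ he
      rw [h0]
      exact hy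
    | succ k ih =>
      intro hk he
      refine AncD.head ?_ he
      rcases h.1 k (by omega) with h1 | h1
      · exact AncD.of_anS ((h.2 k (by omega)).1 ⟨h1, he⟩)
      · exact ih (by omega) h1
  intro k hk
  cases k with
  | zero => rw [h0]; exact hy
  | succ k =>
    rcases h.1 k (by omega) with h1 | h1
    · rcases hk.eq_or_lt with h2 | h2
      · rw [h2, hn]; exact hz
      · rcases h.1 (k + 1) h2 with h3 | h3
        · exact fwd (n - k - 2) (k + 1) (by omega) h3
        · exact AncD.of_anS ((h.2 k h2).1 ⟨h1, h3⟩)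
    · exact bwd k (by omega) h1

theorem moral_of_act {E : V → V → Prop} (hacy : Acyclic E) {S : Set V} {y z : V} (hy : y ∉ S)
    (hz : z ∉ S) (h : Act E S y z) : ReflTransGen (Moral E S y z) y z := by
  obtain ⟨n, p, h0, hn, hw⟩ := h
  have hD := hw.ancD h0 hn
  have claim : ∀ k, k ≤ n → p k ∉ S → ReflTransGen (Moral E S y z) y (p k) := by
    intro k
    induction k using Nat.strong_induction_on with
    | _ k ih =>
      intro hk hkS
      cases k with
      | zero => rw [h0]
      | succ k =>
        by_cases hkS' : p k ∈ S
        -- a `p k ∈ S` is a collider, and the moral edge jumps over it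
        · cases k with
          | zero => exact absurd (h0 ▸ hkS') hy
          | succ k =>
            have hcol : E (p k) (p (k + 1)) ∧ E (p (k + 2)) (p (k + 1)) := by
              by_contra hc
              exact (hw.2 k (by omega)).2 hc hkS'
            have hk0 : p k ∉ S := by
              cases k with
              | zero => rw [h0]; exact hy
              | succ k => exact (hw.2 k (by omega)).2 fun hh => hacy.asymm hcol.1 hh.2
            exact (ih k (by omega) (by omega) hk0).tail
              ⟨⟨hk0, hD k (by omega)⟩, ⟨hkS, hD _ hk⟩, Or.inr ⟨_, hD (k + 1) (by omega), hcol⟩⟩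
        · exact (ih k (by omega) (by omega) hkS').tail
            ⟨⟨hkS', hD k (by omega)⟩, ⟨hkS, hD _ hk⟩, Or.inl (hw.1 k (by omega))⟩
  have := claim n le_rfl (hn ▸ hz)
  rwa [hn] at this

/-- From a reached ancestor of `S ∪ {y, z}` one can either continue to any of its parents or else
walk down to `z`. If the arrival edge is into `v` and `v` is not an ancestor of `S`, one uses a
directed path from `v` to `z`, or enters `v` afresh along a directed path from `v` to `y`. -/
theorem Reach.parent {E : V → V → Prop} (hacy : Acyclic E) {S : Set V} {y z v w : V} {d : Bool}
    (h : Reach E S y v d) (hv : v ∉ S ∨ d = true) (hD : AncD E S y z v) (he : E w v) :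
    Act E S y z ∨ Reach E S y w false := by
  by_cases hA : AnS E S v
  · refine Or.inr (h.step_out hacy he (fun _ => hA) fun hd => ?_)
    exact hv.resolve_right (by simp [hd])
  obtain ⟨s, hs, hr⟩ := hD
  have notS : ∀ u, ReflTransGen E v u → u ∉ S := fun u hu hS => hA ⟨u, hS, hu⟩
  rcases hs with hs | rfl | rfl
  · exact absurd hs (notS s hr)
  · right
    have claim : ∀ u, ReflTransGen E u s → ReflTransGen E v u → Reach E S s u false := by
      intro u hu
      induction hu using ReflTransGen.head_induction_on with
      | refl => intro _; exact Reach.refl E S s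
      | head hab _ ih =>
        intro hva
        exact (ih (hva.tail hab)).step_out hacy hab (by simp) fun _ => notS _ (hva.tail hab)
    exact (claim v hr ReflTransGen.refl).step_out hacy he (by simp)
      fun _ => notS v ReflTransGen.refl
  · left
    have claim : ∀ u, ReflTransGen E v u → ∃ d, Reach E S y u d := by
      intro u hu
      induction hu with
      | refl => exact ⟨d, h⟩
      | tail hab hbc ih =>
        obtain ⟨d', hd'⟩ := ih
        exact ⟨true, hd'.step_in hacy hbc (notS _ hab)⟩
    obtain ⟨d', hd'⟩ := claim s hr
    exact hd'.act

theorem act_of_moral {E : V → V → Prop} (hacy : Acyclic E) {S : Set V} {y z : V}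
    (h : ReflTransGen (Moral E S y z) y z) : Act E S y z := by
  have claim : ∀ v, ReflTransGen (Moral E S y z) y v → Act E S y z ∨ ∃ d, Reach E S y v d := by
    intro v hv
    induction hv with
    | refl => exact Or.inr ⟨false, Reach.refl E S y⟩
    | tail _ hm ih =>
      obtain ⟨⟨haS, haD⟩, -, hadj⟩ := hm
      rcases ih with ih | ⟨d, hd⟩
      · exact Or.inl ih
      rcases hadj with (he | he) | ⟨c, hcD, hac, hbc⟩
      · exact Or.inr ⟨true, hd.step_in hacy he haS⟩
      · rcases hd.parent hacy (Or.inl haS) haD he with h1 | h1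
        · exact Or.inl h1
        · exact Or.inr ⟨false, h1⟩
      · rcases (hd.step_in hacy hac haS).parent hacy (Or.inr rfl) hcD hbc with h1 | h1
        · exact Or.inl h1
        · exact Or.inr ⟨false, h1⟩
  rcases claim z h with h1 | ⟨d, hd⟩
  · exact h1
  · exact hd.act

/-! ### Deleting a vertex satisfying the local conditions -/

/-- Condition (C1): every child of `X` is adjacent to every other neighbour of `X`. -/
def Cond1 (E : V → V → Prop) (X : V) : Prop :=
  ∀ Z, E X Z → ∀ Y, Adj E X Y → Y ≠ Z → Adj E Y Z

/-- Condition (C2): for children `Y → Z` of `X`, every parent of `Y` is a parent of `Z`. -/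
def Cond2 (E : V → V → Prop) (X : V) : Prop :=
  ∀ Y Z, E X Y → E X Z → E Y Z → ∀ W, E W Y → E W Z

theorem transGen_of_del {E : V → V → Prop} {X a b : V} (h : TransGen (Del E X) a b) :
    TransGen E a b :=
  TransGen.mono (fun _ _ hab => hab.1) _ _ h

theorem reflTransGen_of_del {E : V → V → Prop} {X a b : V} (h : ReflTransGen (Del E X) a b) :
    ReflTransGen E a b :=
  ReflTransGen.mono (fun _ _ hab => hab.1) _ _ h

theorem Acyclic.del {E : V → V → Prop} (h : Acyclic E) (X : V) : Acyclic (Del E X) :=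
  fun v hv => h v (transGen_of_del hv)

theorem exists_last_s7 [Fintype V] {E : V → V → Prop} (hacy : Acyclic E) {P : V → Prop} {c : V}
    (hc : P c) : ∃ T, P T ∧ ∀ c, P c → ¬ TransGen E T c := by
  let r : V → V → Prop := fun a b => TransGen E b a
  have : IsTrans V r := ⟨fun a b c hab hbc => TransGen.trans hbc hab⟩
  have : Std.Irrefl r := ⟨fun a => hacy a⟩
  have wf : WellFounded r := Finite.wellFounded_of_trans_of_irrefl r
  obtain ⟨T, hT, hmin⟩ := wf.has_min {c | P c} ⟨c, hc⟩
  exact ⟨T, hT, fun c hc => hmin c hc⟩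

/-- Let `T` be a last child of `X` within a set `P`. Under (C1) and (C2), the moral neighbours of
`X` relative to `P` all lie in `Pa(T) ∪ {T}`. -/
theorem eq_or_edge_of_last {E : V → V → Prop} (hacy : Acyclic E) {X : V} (h1 : Cond1 E X)
    (h2 : Cond2 E X) {P : V → Prop} {T : V} (hXT : E X T)
    (hlast : ∀ c, E X c ∧ P c → ¬ TransGen E T c) {w : V} (hw : Adj E X w → P w)
    (hn : Adj E X w ∨ ∃ c, P c ∧ E X c ∧ E w c) : w = T ∨ E w T := by
  have child : ∀ c, E X c → P c → c = T ∨ E c T := by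
    intro c hc hP
    by_cases hcT : c = T
    · exact Or.inl hcT
    · exact Or.inr ((h1 T hXT c (Or.inl hc) hcT).resolve_right
        fun hh => hlast c ⟨hc, hP⟩ (TransGen.single hh))
  rcases hn with (h | h) | ⟨c, hP, hXc, hwc⟩
  · exact child w h (hw (Or.inl h))
  · have hne : w ≠ T := fun hh => hacy.asymm hXT (hh ▸ h)
    refine Or.inr ((h1 T hXT w (Or.inr h) hne).resolve_right fun hh => ?_)
    exact hacy X (((TransGen.single hXT).tail hh).tail h)
  · rcases child c hXc hP with rfl | hcT
    · exact Or.inr hwc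
    · exact Or.inr (h2 c T hXc hXT hcT w hwc)

theorem reach_del {E : V → V → Prop} (hacy : Acyclic E) {X : V} (h1 : Cond1 E X) {v s : V}
    (hs : s ≠ X) (h : ReflTransGen E v s) :
    (v ≠ X → ReflTransGen (Del E X) v s) ∧
      (v = X → ∃ c, E X c ∧ c ≠ X ∧ ReflTransGen (Del E X) c s) := by
  induction h using ReflTransGen.head_induction_on with
  | refl => exact ⟨fun _ => ReflTransGen.refl, fun hh => absurd hh hs⟩
  | @head a b hab _ ih =>
    constructor
    · intro ha
      by_cases hb : b = X
      · obtain ⟨c, hXc, hcX, hr⟩ := ih.2 hb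
        subst hb
        have hne : a ≠ c := fun hh => hacy.asymm hab (hh ▸ hXc)
        refine ReflTransGen.head ⟨(h1 c hXc a (Or.inr hab) hne).resolve_right fun hh => ?_,
          ha, hcX⟩ hr
        exact hacy a (((TransGen.single hab).tail hXc).tail hh)
      · exact ReflTransGen.head ⟨hab, ha, hb⟩ (ih.1 hb)
    · rintro rfl
      have hb : b ≠ a := fun hh => hacy.irrefl (hh ▸ hab)
      exact ⟨b, hab, hb, ih.1 hb⟩

/-- Connectedness in the moral ancestral graph survives the deletion of `X`: a passage through
`X`, or a common child `X`, is replaced by a last child of `X` among the ancestors. -/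
theorem moral_del [Fintype V] {E : V → V → Prop} (hacy : Acyclic E) {X : V} (h1 : Cond1 E X)
    (h2 : Cond2 E X) {S : Set V} {y z : V} (hX : X ∉ S) (hy : y ≠ X) (hz : z ≠ X)
    (h : ReflTransGen (Moral E S y z) y z) : ReflTransGen (Moral (Del E X) S y z) y z := by
  have hsX : ∀ s, (s ∈ S ∨ s = y ∨ s = z) → s ≠ X := by
    rintro s (hs | rfl | rfl)
    · exact fun hh => hX (hh ▸ hs)
    · exact hy
    · exact hz
  have hD : ∀ v, v ≠ X → AncD E S y z v → AncD (Del E X) S y z v := by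
    rintro v hv ⟨s, hs, hr⟩
    exact ⟨s, hs, (reach_del hacy h1 (hsX s hs) hr).1 hv⟩
  have hT : AncD E S y z X → ∃ T, E X T ∧ T ≠ X ∧ AncD (Del E X) S y z T ∧
      ∀ c, E X c ∧ AncD E S y z c → ¬ TransGen E T c := by
    rintro ⟨s, hs, hr⟩
    obtain ⟨c, hXc, -, hc⟩ := (reach_del hacy h1 (hsX s hs) hr).2 rfl
    have hcD : AncD E S y z c := ⟨s, hs, reflTransGen_of_del hc⟩
    obtain ⟨T, hT, hl⟩ := exists_last_s7 hacy (P := fun c => E X c ∧ AncD E S y z c) ⟨hXc, hcD⟩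
    have hTX : T ≠ X := fun hh => hacy.irrefl (hh ▸ hT.1)
    exact ⟨T, hT.1, hTX, hD T hTX hT.2, hl⟩
  -- two vertices of `Pa(T) ∪ {T}` are equal or adjacent in the moral graph without `X`
  have join : ∀ T a b, T ≠ X → AncD (Del E X) S y z T → a ≠ X → b ≠ X →
      (a ∉ S ∧ AncD E S y z a) → (b ∉ S ∧ AncD E S y z b) → (a = T ∨ E a T) →
      (b = T ∨ E b T) → ReflTransGen (Moral (Del E X) S y z) a b := by
    intro T a b hTX hTD ha hb haD hbD haT hbT
    by_cases hab : a = b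
    · rw [hab]
    refine ReflTransGen.single ⟨⟨haD.1, hD a ha haD.2⟩, ⟨hbD.1, hD b hb hbD.2⟩, ?_⟩
    rcases haT with rfl | haT
    · rcases hbT with rfl | hbT
      · exact absurd rfl hab
      · exact Or.inl (Or.inr ⟨hbT, hb, ha⟩)
    · rcases hbT with rfl | hbT
      · exact Or.inl (Or.inl ⟨haT, ha, hb⟩)
      · exact Or.inr ⟨T, hTD, ⟨haT, ha, hTX⟩, ⟨hbT, hb, hTX⟩⟩
  have claim : ∀ v, ReflTransGen (Moral E S y z) y v →
      (v ≠ X → ReflTransGen (Moral (Del E X) S y z) y v) ∧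
      (v = X → ∃ u, u ≠ X ∧ ReflTransGen (Moral (Del E X) S y z) y u ∧ Moral E S y z u X) := by
    intro v hv
    induction hv with
    | refl => exact ⟨fun _ => ReflTransGen.refl, fun hh => absurd hh hy⟩
    | @tail a b _ hm ih =>
      by_cases ha : a = X
      · obtain ⟨u, huX, hur, hum⟩ := ih.2 ha
        refine ⟨fun hb => ?_, fun _ => ⟨u, huX, hur, hum⟩⟩
        subst ha
        obtain ⟨huD, haD, huadj⟩ := hum
        obtain ⟨-, hbD, hbadj⟩ := hm
        obtain ⟨T, haT, hTa, hTD, hl⟩ := hT haD.2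
        refine hur.trans (join T u b hTa hTD huX hb huD hbD ?_ ?_)
        · refine eq_or_edge_of_last hacy h1 h2 haT hl (fun _ => huD.2) ?_
          exact huadj.imp Or.symm fun ⟨c, hc, huc, hac⟩ => ⟨c, hc, hac, huc⟩
        · exact eq_or_edge_of_last hacy h1 h2 haT hl (fun _ => hbD.2) hbadj
      · refine ⟨fun hb => (ih.1 ha).trans ?_, fun hb => ⟨a, ha, ih.1 ha, hb ▸ hm⟩⟩
        obtain ⟨haD, hbD, hadj⟩ := hm
        rcases hadj with he | ⟨c, hcD, hac, hbc⟩
        · refine ReflTransGen.single ⟨⟨haD.1, hD a ha haD.2⟩, ⟨hbD.1, hD b hb hbD.2⟩, Or.inl ?_⟩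
          exact he.imp (fun h => ⟨h, ha, hb⟩) fun h => ⟨h, hb, ha⟩
        · by_cases hc : c = X
          · subst hc
            obtain ⟨T, hcT, hTc, hTD, hl⟩ := hT hcD
            refine join T a b hTc hTD ha hb haD hbD ?_ ?_
            · exact eq_or_edge_of_last hacy h1 h2 hcT hl (fun _ => haD.2) (Or.inl (Or.inr hac))
            · exact eq_or_edge_of_last hacy h1 h2 hcT hl (fun _ => hbD.2) (Or.inl (Or.inr hbc))
          · exact ReflTransGen.single ⟨⟨haD.1, hD a ha haD.2⟩, ⟨hbD.1, hD b hb hbD.2⟩,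
              Or.inr ⟨c, hD c hc hcD, ⟨hac, ha, hc⟩, ⟨hbc, hb, hc⟩⟩⟩
  exact (claim z h).1 hz

theorem act_of_del {E : V → V → Prop} {X : V} {S : Set V} {y z : V}
    (h : Act (Del E X) S y z) : Act E S y z := by
  obtain ⟨n, p, h0, hn, hw⟩ := h
  refine ⟨n, p, h0, hn, fun i hi => (hw.1 i hi).imp And.left And.left, fun k hk => ?_⟩
  have e1 := hw.1 k (by omega)
  have e2 := hw.1 (k + 1) hk
  have a1 : p k ≠ X := by rcases e1 with e | e; exacts [e.2.1, e.2.2]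
  have a2 : p (k + 1) ≠ X := by rcases e2 with e | e; exacts [e.2.1, e.2.2]
  have a3 : p (k + 2) ≠ X := by rcases e2 with e | e; exacts [e.2.2, e.2.1]
  constructor
  · rintro ⟨c1, c2⟩
    obtain ⟨s, hs, hr⟩ := (hw.2 k hk).1 ⟨⟨c1, a1, a2⟩, ⟨c2, a3, a2⟩⟩
    exact ⟨s, hs, reflTransGen_of_del hr⟩
  · exact fun hc => (hw.2 k hk).2 fun hh => hc ⟨hh.1.1, hh.2.1⟩

theorem removable_of_cond [Fintype V] {E : V → V → Prop} (hacy : Acyclic E) {X : V}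
    (h1 : Cond1 E X) (h2 : Cond2 E X) : Removable E X := by
  intro y z hy hz hyz S hX
  constructor
  · intro h
    by_contra hc
    exact not_dsep_of_act (act_of_del (act_of_not_dsep hyz h.2.1 h.2.2.1 hc)) h
  · intro h
    by_contra hc
    refine not_dsep_of_act (act_of_moral (hacy.del X) ?_) h
    exact moral_del hacy h1 h2 hX hy hz
      (moral_of_act hacy h.2.1 h.2.2.1 (act_of_not_dsep hyz h.2.1 h.2.2.1 hc))

/-! ### Removability forces the local conditions -/

theorem cond1_of_removable {E : V → V → Prop} (hacy : Acyclic E) {X : V}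
    (h : Removable E X) : Cond1 E X := by
  -- the parents of the later vertex `Z` separate `Y` and `Z` in `G ∖ X` only
  have aux : ∀ Y Z, E X Z → Adj E X Y → Y ≠ Z → ¬ Adj E Y Z → TransGen (Del E X) Z Y := by
    intro Y Z hXZ hXY hne hadj
    by_contra hd
    have hZX : Z ≠ X := fun hh => hacy.irrefl (hh ▸ hXZ)
    have hYX : Y ≠ X := by
      rintro rfl
      rcases hXY with h' | h' <;> exact hacy.irrefl h'
    have hXS : X ∉ {u | Del E X u Z} := fun hh => hh.2.1 rfl
    have hsep := dsep_parents (hacy.del X) hne (fun hh => hadj (Or.inl hh.1)) hd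
    have hsepE := (h Y Z hYX hZX hne _ hXS).2 hsep
    have hYS := hsep.2.1
    have hR : ∃ d, Reach E {u | Del E X u Z} Y X d := by
      rcases hXY with h' | h'
      · exact ⟨_, (Reach.refl E _ Y).step_out hacy h' (by simp) fun _ => hYS⟩
      · exact ⟨_, (Reach.refl E _ Y).step_in hacy h' hYS⟩
    obtain ⟨d, hR⟩ := hR
    exact not_dsep_of_act (hR.step_in hacy hXZ hXS).act hsepE
  intro Z hXZ Y hXY hne
  by_contra hadj
  have hZY := aux Y Z hXZ hXY hne hadj
  rcases hXY with h' | h'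
  · have hYZ := aux Z Y h' (Or.inl hXZ) hne.symm fun hh => hadj hh.symm
    exact hacy.del X Z (hZY.trans hYZ)
  · exact hacy Z (((transGen_of_del hZY).tail h').tail hXZ)

theorem cond2_of_removable {E : V → V → Prop} (hacy : Acyclic E) {X : V}
    (h : Removable E X) : Cond2 E X := by
  intro Y Z hXY hXZ hYZ W hWY
  by_cases hWX : W = X
  · rw [hWX]; exact hXZ
  by_contra hWZ
  have hYX : Y ≠ X := fun hh => hacy.irrefl (hh ▸ hXY)
  have hZX : Z ≠ X := fun hh => hacy.irrefl (hh ▸ hXZ)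
  have hne : W ≠ Z := fun hh => hacy.asymm hYZ (hh ▸ hWY)
  have hXS : X ∉ {u | Del E X u Z} := fun hh => hh.2.1 rfl
  have hYS : Y ∈ {u | Del E X u Z} := ⟨hYZ, hYX, hZX⟩
  have hd : ¬ TransGen (Del E X) Z W := fun hh =>
    hacy Z (((transGen_of_del hh).tail hWY).tail hYZ)
  have hsep := dsep_parents (hacy.del X) hne (fun hh => hWZ hh.1) hd
  have hsepE := (h W Z hWX hZX hne _ hXS).2 hsep
  -- the walk `W → Y ← X → Z` is active since `Y` is conditioned on
  have hR := (((Reach.refl E _ W).step_in hacy hWY hsep.2.1).step_out hacy hXY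
    (fun _ => ⟨Y, hYS, ReflTransGen.refl⟩) (by simp)).step_in hacy hXZ hXS
  exact not_dsep_of_act hR.act hsepE

/-! ### The Markov boundary condition -/

theorem ne_of_mem_mb {E : V → V → Prop} (hacy : Acyclic E) {X w : V} (h : w ∈ Mb E X) : w ≠ X := by
  rintro rfl
  rcases h with (h | h) | h
  · exact hacy.irrefl h
  · exact hacy.irrefl h
  · exact h.1 rfl

/-- Parents of a child of `X`, other than `X`, lie in the Markov boundary. -/
theorem mem_mb_of_child {E : V → V → Prop} {X c w : V} (hc : E X c) (hw : E w c) (hne : w ≠ X) :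
    w ∈ Mb E X := by
  by_cases h : Adj E X w
  · rcases h with h | h
    · exact Or.inl (Or.inr h)
    · exact Or.inl (Or.inl h)
  · exact Or.inr ⟨hne, h, c, hc, hw⟩

/-- Two parents of a conditioned vertex `T` are d-connected. -/
theorem not_dsep_collider {E : V → V → Prop} (hacy : Acyclic E) {S : Set V} {Y Z T : V}
    (hY : E Y T) (hZ : E Z T) (hT : T ∈ S) : ¬ DSep E Y Z S := by
  intro h
  exact not_dsep_of_act (((Reach.refl E S Y).step_in hacy hY h.2.1).step_out hacy hZ
    (fun _ => ⟨T, hT, ReflTransGen.refl⟩) (by simp)).act h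

theorem not_dsep_adj {E : V → V → Prop} (hacy : Acyclic E) {S : Set V} {Y Z : V}
    (hYZ : Adj E Y Z) : ¬ DSep E Y Z S := by
  intro h
  rcases hYZ with h' | h'
  · exact not_dsep_of_act ((Reach.refl E S Y).step_in hacy h' h.2.1).act h
  · exact not_dsep_of_act ((Reach.refl E S Y).step_out hacy h' (by simp)
      fun _ => h.2.1).act h

theorem not_dsep_of_cond [Fintype V] {E : V → V → Prop} (hacy : Acyclic E) {X : V}
    (h1 : Cond1 E X) (h2 : Cond2 E X) {Y Z : V} (hY : Y ∈ Mb E X) (hZ : Z ∈ Mb E X)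
    (hne : Y ≠ Z) : ¬ DSep E Y Z ((Mb E X ∪ {X}) \ ({Y, Z} : Set V)) := by
  by_cases hch : ∃ c, E X c
  · obtain ⟨c, hc⟩ := hch
    obtain ⟨T, ⟨hXT, -⟩, hl⟩ := exists_last_s7 hacy (P := fun c => E X c ∧ True) ⟨hc, trivial⟩
    have hT : ∀ w ∈ Mb E X, w = T ∨ E w T := by
      intro w hw
      refine eq_or_edge_of_last hacy h1 h2 hXT hl (fun _ => trivial) ?_
      rcases hw with (hw | hw) | ⟨-, -, c, hc, hwc⟩
      · exact Or.inl (Or.inr hw)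
      · exact Or.inl (Or.inl hw)
      · exact Or.inr ⟨c, trivial, hc, hwc⟩
    rcases hT Y hY with rfl | hYT
    · rcases hT Z hZ with rfl | hZT
      · exact absurd rfl hne
      · exact not_dsep_adj hacy (Or.inr hZT)
    · rcases hT Z hZ with rfl | hZT
      · exact not_dsep_adj hacy (Or.inl hYT)
      · refine not_dsep_collider hacy hYT hZT ⟨Or.inl (Or.inl (Or.inr hXT)), ?_⟩
        rintro (rfl | rfl)
        · exact hacy.irrefl hYT
        · exact hacy.irrefl hZT
  · have hpa : ∀ w ∈ Mb E X, E w X := by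
      rintro w ((hw | hw) | ⟨-, -, c, hc, -⟩)
      · exact hw
      · exact absurd ⟨w, hw⟩ hch
      · exact absurd ⟨c, hc⟩ hch
    refine not_dsep_collider hacy (hpa Y hY) (hpa Z hZ) ⟨Or.inr rfl, ?_⟩
    rintro (hh | hh)
    · exact ne_of_mem_mb hacy hY hh.symm
    · exact ne_of_mem_mb hacy hZ hh.symm

theorem cond_of_not_dsep [Fintype V] {E : V → V → Prop} (hacy : Acyclic E)
    (hdf : DiamondFree E) {X : V}
    (h : ∀ Y ∈ Mb E X, ∀ Z ∈ Mb E X, Y ≠ Z →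
      ¬ DSep E Y Z ((Mb E X ∪ {X}) \ ({Y, Z} : Set V))) : Cond1 E X ∧ Cond2 E X := by
  by_cases hch : ∃ c, E X c
  swap
  · exact ⟨fun Z hZ => absurd ⟨Z, hZ⟩ hch, fun Y Z hY => absurd ⟨Y, hY⟩ hch⟩
  obtain ⟨c, hc⟩ := hch
  obtain ⟨T, hXT, hl⟩ := exists_last_s7 hacy (P := fun c => E X c) hc
  have hTM : T ∈ Mb E X := Or.inl (Or.inr hXT)
  have hTX : ¬ TransGen E T X := fun hh => hacy X (TransGen.head hXT hh)
  have hdesc : ∀ w ∈ Mb E X, ¬ TransGen E T w := by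
    rintro w ((hw | hw) | ⟨-, -, c, hc, hwc⟩) ht
    · exact hTX (ht.tail hw)
    · exact hl w hw ht
    · exact hl c hc (ht.tail hwc)
  have hpa : ∀ w ∈ Mb E X, w ≠ T → E w T := by
    intro w hw hwT
    by_contra hE
    refine no_act hacy hwT hE (hdesc w hw) ?_ ?_
      (act_of_not_dsep hwT ?_ ?_ (h w hw T hTM hwT))
    · intro u hu huw
      refine ⟨?_, ?_⟩
      · by_cases huX : u = X
        · exact Or.inr huX
        · exact Or.inl (mem_mb_of_child hXT hu huX)
      · rintro (hh | hh)
        · exact huw hh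
        · exact hacy.irrefl (hh ▸ hu)
    · rintro s ⟨hs | hs, -⟩
      · exact hdesc s hs
      · rw [show s = X from hs]
        exact hTX
    · exact fun hh => hh.2 (Or.inl rfl)
    · exact fun hh => hh.2 (Or.inr rfl)
  have hnb : ∀ w, Adj E X w → w ∈ Mb E X := by
    rintro w (hw | hw)
    · exact Or.inl (Or.inr hw)
    · exact Or.inl (Or.inl hw)
  constructor
  · intro Z hXZ Y hXY hne
    have hZ := hnb Z (Or.inl hXZ)
    have hY := hnb Y hXY
    by_cases hZT : Z = T
    · subst hZT
      exact Or.inl (hpa Y hY hne)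
    by_cases hYT : Y = T
    · subst hYT
      exact Or.inr (hpa Z hZ hne.symm)
    exact hdf X Y Z T (ne_of_mem_mb hacy hY).symm (ne_of_mem_mb hacy hZ).symm hne hXT
      (hpa Y hY hYT) (hpa Z hZ hZT) hXY (Or.inl hXZ)
  · intro Y Z hXY hXZ hYZ W hWY
    by_cases hWX : W = X
    · rw [hWX]; exact hXZ
    have hW := mem_mb_of_child hXY hWY hWX
    have hWT : W ≠ T := by
      rintro rfl
      exact hl Y hXY (TransGen.single hWY)
    by_cases hZT : Z = T
    · subst hZT
      exact hpa W hW hWT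
    have hYT : Y ≠ T := by
      rintro rfl
      exact hl Z hXZ (TransGen.single hYZ)
    have hYW : Y ≠ W := fun hh => hacy.irrefl (hh ▸ hWY)
    have hYZ' : Y ≠ Z := fun hh => hacy.irrefl (hh ▸ hYZ)
    have hWZ : W ≠ Z := fun hh => hacy.asymm hYZ (hh ▸ hWY)
    refine (hdf Y W Z T hYW hYZ' hWZ (hpa Y (hnb Y (Or.inl hXY)) hYT) (hpa W hW hWT)
      (hpa Z (hnb Z (Or.inl hXZ)) hZT) (Or.inr hWY) (Or.inl hYZ)).resolve_right fun hh => ?_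
    exact hacy W (((TransGen.single hWY).tail hYZ).tail hh)

/-! ### The equivalence -/

/-- in a diamond-free DAG, `X` is removable iff no two distinct members of
`Mb(X)` are d-separated by `(Mb(X) ∪ {X}) ∖ {Y, Z}`. -/
theorem stmt7 [Fintype V] (E : V → V → Prop) (hacy : Acyclic E)
    (hdf : DiamondFree E) (X : V) :
    Removable E X ↔
      ∀ Y ∈ Mb E X, ∀ Z ∈ Mb E X, Y ≠ Z →
        ¬ DSep E Y Z ((Mb E X ∪ {X}) \ ({Y, Z} : Set V)) := by
  constructor
  · intro h Y hY Z hZ hne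
    exact not_dsep_of_cond hacy (cond1_of_removable hacy h) (cond2_of_removable hacy h) hY hZ hne
  · intro h
    obtain ⟨h1, h2⟩ := cond_of_not_dsep hacy hdf h
    exact removable_of_cond hacy h1 h2
end
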